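/- arXiv:2512.07043 — 7 statements merged into one kernel-verified Lean document; each statement's English description precedes it below -/
import Mathlib

section
/- Let cs_1, …, cs_N be the controllable sets generated by the backward recursion. Then for every k ∈ {1, …, N} and every y ∈ ℝⁿ: y ∈ cs_k if and only if there exist controls s_k, …, s_{N−1} ∈ U and states y_k, …, y_N with y_k = y, y_{j+1} = A y_j + B s_j + d for j = k, …, N−1, y_j ∈ X̃ for j = k, …, N−1, and y_N ∈ X_f. That is, cs_k is exactly the set of states from which the terminal set X_f can be reached in N−k steps while satisfying the state and control constraints. -/
open Pointwise Matrix

/-- **Controllable sets are exact backward reachable sets.**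
If `cs N = X_f` and `cs k = X̃ ∩ A⁻¹(cs (k+1) ⊕ ((−B)·U ⊕ (−d)))` for `1 ≤ k < N`,
then for every `1 ≤ k ≤ N`, `y ∈ cs k` iff there are controls `s_k,…,s_{N−1} ∈ U` and
states `y_k = y`, `y_{j+1} = A y_j + B s_j + d`, with `y_j ∈ X̃` for `k ≤ j < N`
and `y_N ∈ X_f`. -/
theorem controllable_set_characterization {n m N : ℕ}
    (A : Matrix (Fin n) (Fin n) ℝ) (hA : IsUnit A)
    (B : Matrix (Fin n) (Fin m) ℝ) (d : Fin n → ℝ)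
    (X : Set (Fin n → ℝ)) (U : Set (Fin m → ℝ)) (Xf : Set (Fin n → ℝ))
    (cs : ℕ → Set (Fin n → ℝ))
    (hcsN : cs N = Xf)
    (hcs : ∀ k, 1 ≤ k → k < N →
      cs k = X ∩ ((fun y => A.mulVec y) ⁻¹'
        (cs (k + 1) + ((fun s => (-B).mulVec s) '' U + ({-d} : Set (Fin n → ℝ)))))) :
    ∀ k, 1 ≤ k → k ≤ N → ∀ y : Fin n → ℝ,
      y ∈ cs k ↔
        ∃ (s : ℕ → Fin m → ℝ) (x : ℕ → Fin n → ℝ),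
          x k = y ∧
          (∀ j, k ≤ j → j < N →
            s j ∈ U ∧
            x (j + 1) = A.mulVec (x j) + B.mulVec (s j) + d ∧
            x j ∈ X) ∧
          x N ∈ Xf := by
  have step : ∀ k, 1 ≤ k → k < N → ∀ y, y ∈ cs k ↔
      y ∈ X ∧ ∃ u ∈ U, A.mulVec y + B.mulVec u + d ∈ cs (k + 1) := by
    intro k hk hkN y
    rw [hcs k hk hkN]
    constructor
    · rintro ⟨hX, z, hz, w, ⟨v, ⟨u, hu, rfl⟩, e, he, rfl⟩, h⟩
      refine ⟨hX, u, hu, ?_⟩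
      rw [Set.mem_singleton_iff] at he
      subst he
      have h2 : z + ((-B).mulVec u + -d) = A.mulVec y := h
      rw [← h2, Matrix.neg_mulVec]
      have : z + (-(B.mulVec u) + -d) + B.mulVec u + d = z := by abel
      rw [this]
      exact hz
    · rintro ⟨hX, u, hu, h⟩
      refine ⟨hX, _, h, _, ⟨_, ⟨u, hu, rfl⟩, -d, rfl, rfl⟩, ?_⟩
      change A.mulVec y + B.mulVec u + d + ((-B).mulVec u + -d) = A.mulVec y
      rw [Matrix.neg_mulVec]
      abel
  intro k hk hkN
  induction hkN using Nat.decreasingInduction with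
  | self =>
    intro y
    constructor
    · intro h
      exact ⟨fun _ => 0, fun _ => y, rfl, fun j h1 h2 => by omega, hcsN ▸ h⟩
    · rintro ⟨s, x, rfl, -, h⟩
      exact hcsN ▸ h
  | of_succ k hkN ih =>
    intro y
    rw [step k hk hkN]
    constructor
    · rintro ⟨hX, u, hu, h⟩
      obtain ⟨s, x, hx, hj, hN⟩ := (ih (by omega) _).1 h
      refine ⟨fun j => if j = k then u else s j, fun j => if j = k then y else x j,
        by simp, ?_, ?_⟩
      · intro j h1 h2
        by_cases hjk : j = k
        · subst hjk
          simp [hu, hX, hx]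
        · have h3 : j + 1 ≠ k := by omega
          simpa [hjk, h3] using hj j (by omega) h2
      · have h3 : N ≠ k := by omega
        simpa [h3] using hN
    · rintro ⟨s, x, rfl, hj, hN⟩
      obtain ⟨h1, h2, h3⟩ := hj k le_rfl hkN
      refine ⟨h3, s k, h1, (ih (by omega) _).2 ⟨s, x, h2, ?_, hN⟩⟩
      intro j h4 h5
      exact hj j (by omega) h5
end

section
/- Let cs_1, …, cs_N be the controllable sets generated by the backward recursion. If X̃, X_f ⊆ ℝⁿ and U ⊆ ℝᵐ are compact and convex, then every controllable set cs_k, k = 1, …, N, is compact and convex. -/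
open Pointwise Matrix

/-- **Compactness and convexity of controllable sets.**
If `X̃`, `X_f`, and `U` are compact and convex, then every controllable set `cs k`,
`1 ≤ k ≤ N`, generated by the backward recursion is compact and convex. -/
theorem controllable_sets_compact_convex {n m N : ℕ}
    (A : Matrix (Fin n) (Fin n) ℝ) (hA : IsUnit A)
    (B : Matrix (Fin n) (Fin m) ℝ) (d : Fin n → ℝ)
    (X : Set (Fin n → ℝ)) (U : Set (Fin m → ℝ)) (Xf : Set (Fin n → ℝ))
    (hXc : IsCompact X) (hXv : Convex ℝ X)
    (hUc : IsCompact U) (hUv : Convex ℝ U)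
    (hXfc : IsCompact Xf) (hXfv : Convex ℝ Xf)
    (cs : ℕ → Set (Fin n → ℝ))
    (hcsN : cs N = Xf)
    (hcs : ∀ k, 1 ≤ k → k < N →
      cs k = X ∩ ((fun y => A.mulVec y) ⁻¹'
        (cs (k + 1) + ((fun s => (-B).mulVec s) '' U + ({-d} : Set (Fin n → ℝ)))))) :
    ∀ k, 1 ≤ k → k ≤ N → IsCompact (cs k) ∧ Convex ℝ (cs k) := by
  intro k hk hkN
  induction hkN using Nat.decreasingInduction with
  | self => rw [hcsN]; exact ⟨hXfc, hXfv⟩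
  | of_succ k hlt ih =>
    obtain ⟨hc, hv⟩ := ih (by omega)
    rw [hcs k hk hlt]
    have hBc : Continuous (fun s => (-B).mulVec s) :=
      Continuous.matrix_mulVec continuous_const continuous_id
    have hAc : Continuous (fun y => A.mulVec y) :=
      Continuous.matrix_mulVec continuous_const continuous_id
    refine ⟨?_, ?_⟩
    · exact hXc.inter_right
        ((hc.add ((hUc.image hBc).add isCompact_singleton)).isClosed.preimage hAc)
    · refine hXv.inter ?_
      have h1 : Convex ℝ ((fun s => (-B).mulVec s) '' U) :=
        hUv.linear_image (Matrix.mulVecLin (-B))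
      exact (hv.add (h1.add (convex_singleton _))).linear_preimage (Matrix.mulVecLin A)
end

section
/- Let cs_1, …, cs_N be the controllable sets of the cost-augmented system generated by the backward recursion. Then for every k ∈ {1, …, N−1} and every (x, c) ∈ ℝⁿ × ℝ: (x, c) ∈ cs_k if and only if there exist controls s_k, …, s_{N−1} ∈ Ũ and states x_k = x, x_{j+1} = A x_j + B s_j + d, such that x_N ∈ X_f, (x_j, Σ_{i=j}^{N−1} ℓ(s_i)) ∈ X̃ for all j = k, …, N−1, and c = Σ_{i=k}^{N−1} ℓ(s_i). Consequently, the slice {c : (x, c) ∈ cs_k} equals the set of total costs Σ_{j=k}^{N−1} ℓ(s_j) of feasible (N−k)-step trajectories from x to X_f. -/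
open Pointwise Matrix

/-- **Characterization of the cost-augmented controllable sets.**
For the cost-augmented system `(x,c) ↦ (A x + B s + d, c − ℓ s)` with
`cs N = X_f × {0}` and `cs k = X̃ ∩ Ã⁻¹(cs (k+1) ⊕ ((−B̃)·Ũ ⊕ (−d̃)))`,
a pair `(x, c)` is in `cs k` (for `1 ≤ k ≤ N−1`) iff there is a feasible
`(N−k)`-step trajectory from `x` to `X_f` whose tails of accumulated cost
satisfy the augmented state constraint, with total cost exactly `c`. -/
theorem augmented_controllable_set_characterization {n m N : ℕ}
    (A : Matrix (Fin n) (Fin n) ℝ) (hA : IsUnit A)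
    (B : Matrix (Fin n) (Fin m) ℝ) (d : Fin n → ℝ)
    (ℓ : (Fin m → ℝ) →ₗ[ℝ] ℝ)
    (Xt : Set ((Fin n → ℝ) × ℝ)) (Ut : Set (Fin m → ℝ)) (Xf : Set (Fin n → ℝ))
    (cs : ℕ → Set ((Fin n → ℝ) × ℝ))
    (hcsN : cs N = Xf ×ˢ ({0} : Set ℝ))
    (hcs : ∀ k, 1 ≤ k → k < N →
      cs k = Xt ∩ ((fun p : (Fin n → ℝ) × ℝ => (A.mulVec p.1, p.2)) ⁻¹'
        (cs (k + 1) +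
          ((fun s => (-(B.mulVec s), ℓ s)) '' Ut +
            ({(-d, (0 : ℝ))} : Set ((Fin n → ℝ) × ℝ)))))) :
    ∀ k, 1 ≤ k → k < N → ∀ (x : Fin n → ℝ) (c : ℝ),
      (x, c) ∈ cs k ↔
        ∃ (s : ℕ → Fin m → ℝ) (xs : ℕ → Fin n → ℝ),
          xs k = x ∧
          (∀ j, k ≤ j → j < N →
            s j ∈ Ut ∧
            xs (j + 1) = A.mulVec (xs j) + B.mulVec (s j) + d ∧
            (xs j, ∑ i ∈ Finset.Ico j N, ℓ (s i)) ∈ Xt) ∧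
          xs N ∈ Xf ∧
          c = ∑ i ∈ Finset.Ico k N, ℓ (s i) := by
  have step : ∀ k, 1 ≤ k → k < N → ∀ (x : Fin n → ℝ) (c : ℝ), (x, c) ∈ cs k ↔
      (x, c) ∈ Xt ∧ ∃ u ∈ Ut, (A.mulVec x + B.mulVec u + d, c - ℓ u) ∈ cs (k + 1) := by
    intro k h1 h2 x c
    rw [hcs k h1 h2]
    constructor
    · rintro ⟨hX, p, hp, q, ⟨_, ⟨u, hu, rfl⟩, r, hr, rfl⟩, h⟩
      rw [Set.mem_singleton_iff] at hr
      subst hr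
      refine ⟨hX, u, hu, ?_⟩
      have ha : p.1 + (-(B.mulVec u) + -d) = A.mulVec x := congrArg Prod.fst h
      have hb : p.2 + (ℓ u + 0) = c := congrArg Prod.snd h
      have : (A.mulVec x + B.mulVec u + d, c - ℓ u) = p := by
        refine Prod.ext ?_ ?_
        · show A.mulVec x + B.mulVec u + d = p.1
          rw [← ha]; abel
        · show c - ℓ u = p.2
          rw [← hb]; ring
      rw [this]; exact hp
    · rintro ⟨hX, u, hu, h⟩
      refine ⟨hX, _, h, _, ⟨_, ⟨u, hu, rfl⟩, _, rfl, rfl⟩, ?_⟩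
      refine Prod.ext ?_ ?_
      · show A.mulVec x + B.mulVec u + d + (-(B.mulVec u) + -d) = A.mulVec x
        abel
      · show c - ℓ u + (ℓ u + 0) = c
        ring
  have key : ∀ r k, 1 ≤ k → k + r = N → ∀ (x : Fin n → ℝ) (c : ℝ),
      (x, c) ∈ cs k ↔
        ∃ (s : ℕ → Fin m → ℝ) (xs : ℕ → Fin n → ℝ),
          xs k = x ∧
          (∀ j, k ≤ j → j < N →
            s j ∈ Ut ∧
            xs (j + 1) = A.mulVec (xs j) + B.mulVec (s j) + d ∧
            (xs j, ∑ i ∈ Finset.Ico j N, ℓ (s i)) ∈ Xt) ∧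
          xs N ∈ Xf ∧
          c = ∑ i ∈ Finset.Ico k N, ℓ (s i) := by
    intro r
    induction r with
    | zero =>
      intro k h1 hk x c
      obtain rfl : k = N := by omega
      rw [hcsN]
      constructor
      · rintro ⟨hx, hc⟩
        refine ⟨fun _ => 0, fun _ => x, rfl, fun j h h' => by omega, hx, ?_⟩
        simpa using hc
      · rintro ⟨s, xs, rfl, -, hf, hc⟩
        exact ⟨hf, by simpa using hc⟩
    | succ r ih =>
      intro k h1 hk x c
      have hkN : k < N := by omega
      rw [step k h1 hkN]
      constructor
      · rintro ⟨hX, u, hu, h⟩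
        obtain ⟨s, xs, hx, hj, hf, hc⟩ := (ih (k + 1) (by omega) (by omega) _ _).1 h
        have hs : ∀ j, k + 1 ≤ j → ∑ i ∈ Finset.Ico j N, ℓ (Function.update s k u i)
            = ∑ i ∈ Finset.Ico j N, ℓ (s i) := by
          intro j hj
          refine Finset.sum_congr rfl fun i hi => ?_
          have := (Finset.mem_Ico.1 hi).1
          rw [Function.update_of_ne (by omega)]
        have hs0 : c = ∑ i ∈ Finset.Ico k N, ℓ (Function.update s k u i) := by
          rw [Finset.sum_eq_sum_Ico_succ_bot hkN, hs _ le_rfl, ← hc, Function.update_self]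
          ring
        refine ⟨Function.update s k u, Function.update xs k x, Function.update_self .., ?_, ?_, hs0⟩
        · intro j hkj hjN
          rcases Nat.eq_or_lt_of_le hkj with rfl | hlt
          · rw [← hs0, Function.update_self, Function.update_self,
              Function.update_of_ne (by omega)]
            exact ⟨hu, hx, hX⟩
          · rw [hs j hlt, Function.update_of_ne (by omega), Function.update_of_ne (by omega),
              Function.update_of_ne (by omega)]
            exact hj j hlt hjN
        · rw [Function.update_of_ne (by omega)]
          exact hf
      · rintro ⟨s, xs, rfl, hj, hf, rfl⟩
        obtain ⟨hu, hx, hX⟩ := hj k le_rfl hkN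
        refine ⟨hX, s k, hu, (ih (k + 1) (by omega) (by omega) _ _).2
          ⟨s, xs, hx, fun j h h' => hj j (by omega) h', hf, ?_⟩⟩
        rw [Finset.sum_eq_sum_Ico_succ_bot hkN]
        ring
  intro k h1 h2
  exact key (N - k) k h1 (by omega)
end

section
/- (Optimal horizon / Theorem 1.) Let cs_1, …, cs_N be the controllable sets of the cost-augmented system generated by the backward recursion, and assume each cs_k is compact. Fix an initial condition x_i ∈ ℝⁿ, let K := {k ∈ {1, …, N} : ∃ c ∈ ℝ, (x_i, c) ∈ cs_k}, and assume K is nonempty. For k ∈ K, set c_k := min{c : (x_i, c) ∈ cs_k}, and let J_k be the infimum of the total cost Σ_{j=k}^{N−1} ℓ(s_j) over all feasible (N−k)-step trajectories from x_i, i.e., controls s_k, …, s_{N−1} ∈ Ũ and states x_k = x_i, x_{j+1} = A x_j + B s_j + d with (x_j, Σ_{i=j}^{N−1} ℓ(s_i)) ∈ X̃ for j = k, …, N−1 and x_N ∈ X_f. Then J_k = c_k for every k ∈ K, and hence, with k* := argmin_{k ∈ K} c_k, the globally optimal free-final-time cost min_{k ∈ K} J_k equals c_{k*} and is achieved with horizon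 length N − k*. -/
open Pointwise Matrix

theorem traj_aux {n m N : ℕ}
    (A : Matrix (Fin n) (Fin n) ℝ)
    (B : Matrix (Fin n) (Fin m) ℝ) (d : Fin n → ℝ)
    (ℓ : (Fin m → ℝ) →ₗ[ℝ] ℝ)
    (Xt : Set ((Fin n → ℝ) × ℝ)) (Ut : Set (Fin m → ℝ)) (Xf : Set (Fin n → ℝ))
    (cs : ℕ → Set ((Fin n → ℝ) × ℝ))
    (hcsN : cs N = Xf ×ˢ ({0} : Set ℝ))
    (hcs : ∀ k, 1 ≤ k → k < N →
      cs k = Xt ∩ ((fun p : (Fin n → ℝ) × ℝ => (A.mulVec p.1, p.2)) ⁻¹'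
        (cs (k + 1) +
          ((fun s => (-(B.mulVec s), ℓ s)) '' Ut +
            ({(-d, (0 : ℝ))} : Set ((Fin n → ℝ) × ℝ))))))
    (t : ℕ) : ∀ k, 1 ≤ k → k + t = N → ∀ (x : Fin n → ℝ) (c : ℝ), (x, c) ∈ cs k ↔
      ∃ (s : ℕ → Fin m → ℝ) (xs : ℕ → Fin n → ℝ),
        xs k = x ∧
        (∀ j, k ≤ j → j < N →
          s j ∈ Ut ∧
          xs (j + 1) = A.mulVec (xs j) + B.mulVec (s j) + d ∧
          (xs j, ∑ i ∈ Finset.Ico j N, ℓ (s i)) ∈ Xt) ∧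
        xs N ∈ Xf ∧
        c = ∑ i ∈ Finset.Ico k N, ℓ (s i) := by
  induction t with
  | zero =>
    intro k hk hkN x c
    obtain rfl : k = N := by omega
    rw [hcsN]
    constructor
    · rintro ⟨h1, h2⟩
      refine ⟨fun _ => 0, fun _ => x, rfl, fun j _ _ => by omega, h1, ?_⟩
      simpa using h2
    · rintro ⟨s, xs, rfl, -, h1, h2⟩
      refine ⟨h1, ?_⟩
      simpa using h2
  | succ t ih =>
    intro k hk hkN x c
    have hlt : k < N := by omega
    have ih' := ih (k + 1) (by omega) (by omega)
    rw [hcs k hk hlt]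
    constructor
    · rintro ⟨hX, ⟨y, e⟩, hp, q, ⟨_, ⟨u, hu, rfl⟩, _, rfl, rfl⟩, h⟩
      obtain ⟨s, xs, hx, hj, hN, rfl⟩ := (ih' y e).1 hp
      simp only [Prod.mk_add_mk, Prod.mk.injEq] at h
      obtain ⟨h1, h2⟩ := h
      have hs : ∀ j, k + 1 ≤ j →
          ∑ i ∈ Finset.Ico j N, ℓ (Function.update s k u i) = ∑ i ∈ Finset.Ico j N, ℓ (s i) := by
        intro j hkj
        refine Finset.sum_congr rfl fun i hi => ?_
        rw [Finset.mem_Ico] at hi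
        rw [Function.update_of_ne (by omega)]
      have hc : c = ∑ i ∈ Finset.Ico k N, ℓ (Function.update s k u i) := by
        rw [Finset.sum_eq_sum_Ico_succ_bot hlt, hs _ le_rfl, Function.update_self]
        linarith
      refine ⟨Function.update s k u, Function.update xs k x, by simp, ?_, ?_, hc⟩
      · intro j hkj hjN
        rcases hkj.eq_or_lt with rfl | hkj
        · rw [← hc]
          refine ⟨by simpa using hu, ?_, by simpa using hX⟩
          rw [Function.update_of_ne (by omega), Function.update_self, Function.update_self, hx,
            ← h1]
          abel
        · rw [hs j hkj, Function.update_of_ne (by omega), Function.update_of_ne (by omega),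
            Function.update_of_ne (by omega)]
          exact hj j hkj hjN
      · rw [Function.update_of_ne (by omega)]
        exact hN
    · rintro ⟨s, xs, rfl, hj, hN, rfl⟩
      obtain ⟨hu, hx, hX⟩ := hj k le_rfl hlt
      refine ⟨hX, (xs (k + 1), ∑ i ∈ Finset.Ico (k + 1) N, ℓ (s i)),
        (ih' _ _).2 ⟨s, xs, rfl, fun j h1 h2 => hj j (by omega) h2, hN, rfl⟩, _,
        ⟨_, ⟨s k, hu, rfl⟩, _, rfl, rfl⟩, ?_⟩
      simp only [Prod.mk_add_mk, Prod.mk.injEq]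
      constructor
      · rw [hx]; abel
      · rw [Finset.sum_eq_sum_Ico_succ_bot hlt]; ring

/-- **Optimal horizon computation (Theorem 1).**
With compact cost-augmented controllable sets `cs k`, for every index `k` in
`K = {k ∈ {1,…,N} : ∃ c, (x_i, c) ∈ cs k}` the optimal `(N−k)`-step trajectory cost
`J_k` from `x_i` equals the least cost-to-go `c_k = min{c : (x_i, c) ∈ cs k}`; hence
the globally optimal free-final-time cost `min_{k ∈ K} J_k` equals `c_{kstar}` for
`kstar = argmin_{k ∈ K} c_k`, achieved with horizon length `N − kstar`. -/
theorem optimal_horizon {n m N : ℕ}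
    (A : Matrix (Fin n) (Fin n) ℝ) (hA : IsUnit A)
    (B : Matrix (Fin n) (Fin m) ℝ) (d : Fin n → ℝ)
    (ℓ : (Fin m → ℝ) →ₗ[ℝ] ℝ)
    (Xt : Set ((Fin n → ℝ) × ℝ)) (Ut : Set (Fin m → ℝ)) (Xf : Set (Fin n → ℝ))
    (cs : ℕ → Set ((Fin n → ℝ) × ℝ))
    (hcsN : cs N = Xf ×ˢ ({0} : Set ℝ))
    (hcs : ∀ k, 1 ≤ k → k < N →
      cs k = Xt ∩ ((fun p : (Fin n → ℝ) × ℝ => (A.mulVec p.1, p.2)) ⁻¹'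
        (cs (k + 1) +
          ((fun s => (-(B.mulVec s), ℓ s)) '' Ut +
            ({(-d, (0 : ℝ))} : Set ((Fin n → ℝ) × ℝ))))))
    (hcompact : ∀ k, 1 ≤ k → k ≤ N → IsCompact (cs k))
    (xi : Fin n → ℝ)
    (K : Set ℕ) (hK : K = {k | 1 ≤ k ∧ k ≤ N ∧ ∃ c : ℝ, (xi, c) ∈ cs k})
    (hKne : K.Nonempty)
    (slice : ℕ → Set ℝ) (hslice : ∀ k, slice k = {c : ℝ | (xi, c) ∈ cs k})
    (cost : ℕ → Set ℝ)
    (hcost : ∀ k, cost k = {J : ℝ |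
      ∃ (s : ℕ → Fin m → ℝ) (xs : ℕ → Fin n → ℝ),
        xs k = xi ∧
        (∀ j, k ≤ j → j < N →
          s j ∈ Ut ∧
          xs (j + 1) = A.mulVec (xs j) + B.mulVec (s j) + d ∧
          (xs j, ∑ i ∈ Finset.Ico j N, ℓ (s i)) ∈ Xt) ∧
        xs N ∈ Xf ∧
        J = ∑ i ∈ Finset.Ico k N, ℓ (s i)}) :
    (∀ k ∈ K, sInf (cost k) = sInf (slice k)) ∧
    ∃ kstar ∈ K,
      (∀ k ∈ K, sInf (slice kstar) ≤ sInf (slice k)) ∧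
      sInf (cost kstar) = sInf (slice kstar) ∧
      ∀ k ∈ K, sInf (cost kstar) ≤ sInf (cost k) := by
  have key : ∀ k ∈ K, cost k = slice k := by
    intro k hk
    rw [hK] at hk
    obtain ⟨h1, h2, -⟩ := hk
    rw [hcost, hslice]
    ext c
    exact (traj_aux A B d ℓ Xt Ut Xf cs hcsN hcs (N - k) k h1 (by omega) xi c).symm
  have hfin : K.Finite := by
    rw [hK]
    exact (Set.finite_Icc 1 N).subset fun k hk => ⟨hk.1, hk.2.1⟩
  obtain ⟨ks, hks, hmin⟩ := Set.exists_min_image K (fun k => sInf (slice k)) hfin hKne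
  refine ⟨fun k hk => by rw [key k hk], ks, hks, hmin, by rw [key ks hks], fun k hk => ?_⟩
  rw [key k hk, key ks hks]
  exact hmin k hk
end

section
/- (Robustified thrust-pointing constraint.) Let V be a real inner product space, let e ∈ V be a unit vector, let ψ ≥ 0 and 0 ≤ κ ≤ 1. If u ∈ V satisfies ⟨e, u⟩ − ψ ≥ (‖u‖ + ψ) κ, then for every w ∈ V with ‖w‖ ≤ ψ, ⟨e, u + w⟩ ≥ ‖u + w‖ κ. That is, the tightened pointing constraint guarantees the original pointing constraint for every disturbance of norm at most ψ. -/
open scoped RealInnerProductSpace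

/-- **Robustified thrust-pointing constraint.**
For a unit vector `e`, `ψ ≥ 0`, and `κ ∈ [0, 1]`, the tightened pointing constraint
`⟨e, u⟩ − ψ ≥ (‖u‖ + ψ) κ` guarantees `⟨e, u + w⟩ ≥ ‖u + w‖ κ` for every
disturbance `w` with `‖w‖ ≤ ψ`. -/
theorem robustified_pointing_constraint {V : Type*}
    [NormedAddCommGroup V] [InnerProductSpace ℝ V]
    (e : V) (he : ‖e‖ = 1) (ψ κ : ℝ) (hψ : 0 ≤ ψ)
    (hκ0 : 0 ≤ κ) (hκ1 : κ ≤ 1) (u : V)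
    (h : ⟪e, u⟫ - ψ ≥ (‖u‖ + ψ) * κ) :
    ∀ w : V, ‖w‖ ≤ ψ → ⟪e, u + w⟫ ≥ ‖u + w‖ * κ := by
  intro w hw
  have h1 : -⟪e, w⟫ ≤ ‖e‖ * ‖w‖ :=
    (neg_le_abs _).trans (abs_real_inner_le_norm e w)
  rw [he, one_mul] at h1
  have h2 : ‖u + w‖ * κ ≤ (‖u‖ + ψ) * κ :=
    mul_le_mul_of_nonneg_right ((norm_add_le u w).trans (by linarith)) hκ0
  rw [inner_add_right]
  linarith
end

section
/- (Robust one-step recursion.) Let A be an invertible n×n real matrix, B an n×m real matrix, d ∈ ℝⁿ, and let X̃, C ⊆ ℝⁿ, U ⊆ ℝᵐ, and W ⊆ ℝⁿ be arbitrary sets. Then X̃ ∩ A⁻¹((C ⊖ W) ⊕ ((−B)·U ⊕ (−d))) = {y ∈ X̃ : ∃ s ∈ U such that for all w ∈ W, A y + B s + d + w ∈ C}; i.e., a state is in the robustly controllable one-step set if and only if it satisfies the state constraint and admits a feasible control driving it into C for every disturbance in W. -/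
open Pointwise Matrix

/-- **Robust one-step backward recursion identity** (Algorithm 4 step):
`X̃ ∩ A⁻¹((C ⊖ W) ⊕ ((−B)·U ⊕ (−d)))` is exactly the set of states `y ∈ X̃`
admitting a control `s ∈ U` with `A y + B s + d + w ∈ C` for every disturbance
`w ∈ W`, where `C ⊖ W = {y : ∀ w ∈ W, y + w ∈ C}` is the Pontryagin difference. -/
theorem robust_one_step_backward_recursion {n m : ℕ}
    (A : Matrix (Fin n) (Fin n) ℝ) (hA : IsUnit A)
    (B : Matrix (Fin n) (Fin m) ℝ) (d : Fin n → ℝ)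
    (X C : Set (Fin n → ℝ)) (U : Set (Fin m → ℝ)) (W : Set (Fin n → ℝ)) :
    X ∩ ((fun y => A.mulVec y) ⁻¹'
        ({y : Fin n → ℝ | ∀ w ∈ W, y + w ∈ C} +
          ((fun s => (-B).mulVec s) '' U + ({-d} : Set (Fin n → ℝ)))))
      = {y ∈ X | ∃ s ∈ U, ∀ w ∈ W, A.mulVec y + B.mulVec s + d + w ∈ C} := by
  ext y
  constructor
  · rintro ⟨hy, c, hc, _, ⟨_, ⟨s, hs, rfl⟩, _, rfl, rfl⟩, h⟩
    refine ⟨hy, s, hs, fun w hw => ?_⟩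
    have h' : A.mulVec y = c + ((-B).mulVec s + -d) := h.symm
    have e : A.mulVec y + B.mulVec s + d + w = c + w := by
      rw [h', Matrix.neg_mulVec]; abel
    rw [e]
    exact hc w hw
  · rintro ⟨hy, s, hs, h⟩
    refine ⟨hy, A.mulVec y + B.mulVec s + d, h, _,
      ⟨_, ⟨s, hs, rfl⟩, _, rfl, rfl⟩, ?_⟩
    change A.mulVec y + B.mulVec s + d + ((-B).mulVec s + -d) = A.mulVec y
    rw [Matrix.neg_mulVec]; abel
end

section
/- (Robust closed-loop guarantee of the robust controllable tube.) Let A be an invertible n×n real matrix, B an n×m real matrix, d ∈ ℝⁿ, X̃ ⊆ ℝⁿ, U ⊆ ℝᵐ, X_f ⊆ ℝⁿ, and disturbance sets W_1, …, W_N ⊆ ℝⁿ. Define the robust controllable sets by cs_N := X_f ⊖ W_N and cs_k := X̃ ∩ A⁻¹((cs_{k+1} ⊖ W_k) ⊕ ((−B)·U ⊕ (−d))) for k = N−1, …, 1. Then for every k ∈ {1, …, N} there exist policy maps π_j : ℝⁿ → ℝᵐ for j = k, …, N−1 with the following property: for every y_k ∈ cs_k and every disturbance sequence with w_j ∈ W_j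 for j = k, …, N, the closed-loop trajectory y_{j+1} = A y_j + B π_j(y_j) + d + w_j satisfies π_j(y_j) ∈ U and y_j ∈ cs_j for all j = k, …, N, and y_N + w_N ∈ X_f. That is, from any state in the robust controllable tube the state can be kept in the tube and driven into the terminal set for every admissible disturbance realization. -/
open Pointwise Matrix

/-- **Robust closed-loop guarantee of the robust controllable tube.**
With `cs N = X_f ⊖ W_N` and
`cs k = X̃ ∩ A⁻¹((cs (k+1) ⊖ W_k) ⊕ ((−B)·U ⊕ (−d)))` for `1 ≤ k < N`, for every
`1 ≤ k ≤ N` there exist policy maps `π_j` such that, for every admissible disturbance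
sequence `w_j ∈ W_j` and every closed-loop trajectory started at `y_k ∈ cs k` with
`y_{j+1} = A y_j + B π_j(y_j) + d + w_j`, the controls satisfy `π_j(y_j) ∈ U`, the
state remains in the tube (`y_j ∈ cs j` for `k ≤ j ≤ N`), and `y_N + w_N ∈ X_f`. -/
theorem robust_tube_closed_loop_guarantee {n m N : ℕ}
    (A : Matrix (Fin n) (Fin n) ℝ) (hA : IsUnit A)
    (B : Matrix (Fin n) (Fin m) ℝ) (d : Fin n → ℝ)
    (X : Set (Fin n → ℝ)) (U : Set (Fin m → ℝ)) (Xf : Set (Fin n → ℝ))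
    (W : ℕ → Set (Fin n → ℝ))
    (cs : ℕ → Set (Fin n → ℝ))
    (hcsN : cs N = {y : Fin n → ℝ | ∀ w ∈ W N, y + w ∈ Xf})
    (hcs : ∀ k, 1 ≤ k → k < N →
      cs k = X ∩ ((fun y => A.mulVec y) ⁻¹'
        ({y : Fin n → ℝ | ∀ w ∈ W k, y + w ∈ cs (k + 1)} +
          ((fun s => (-B).mulVec s) '' U + ({-d} : Set (Fin n → ℝ)))))) :
    ∀ k, 1 ≤ k → k ≤ N →
      ∃ π : ℕ → (Fin n → ℝ) → (Fin m → ℝ),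
        ∀ w : ℕ → Fin n → ℝ, (∀ j, k ≤ j → j ≤ N → w j ∈ W j) →
        ∀ y : ℕ → Fin n → ℝ, y k ∈ cs k →
          (∀ j, k ≤ j → j < N →
            y (j + 1) = A.mulVec (y j) + B.mulVec (π j (y j)) + d + w j) →
          (∀ j, k ≤ j → j < N → π j (y j) ∈ U) ∧
          (∀ j, k ≤ j → j ≤ N → y j ∈ cs j) ∧
          y N + w N ∈ Xf := by
  intro k hk hkN
  have key : ∀ (j : ℕ) (x : Fin n → ℝ), ∃ u : Fin m → ℝ, 1 ≤ j → j < N → x ∈ cs j →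
      u ∈ U ∧ ∀ v ∈ W j, A.mulVec x + B.mulVec u + d + v ∈ cs (j + 1) := by
    intro j x
    by_cases h : 1 ≤ j ∧ j < N ∧ x ∈ cs j
    · obtain ⟨h1, h2, h3⟩ := h
      rw [hcs j h1 h2] at h3
      obtain ⟨-, z, hz, t, ⟨r, ⟨u, hu, rfl⟩, e, he, rfl⟩, hzt⟩ := h3
      rw [Set.mem_singleton_iff] at he
      subst he
      refine ⟨u, fun _ _ _ => ⟨hu, fun v hv => ?_⟩⟩
      have h4 : A.mulVec x + B.mulVec u + d = z := by
        have h5 : z + ((-B).mulVec u + -d) = A.mulVec x := hzt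
        rw [← h5, Matrix.neg_mulVec]
        abel
      rw [h4]
      exact hz v hv
    · exact ⟨0, fun h1 h2 h3 => absurd ⟨h1, h2, h3⟩ h⟩
  choose π hπ using key
  refine ⟨π, fun w hw y hy hdyn => ?_⟩
  have tube : ∀ j, k ≤ j → j ≤ N → y j ∈ cs j := by
    intro j hj
    induction j, hj using Nat.le_induction with
    | base => exact fun _ => hy
    | succ j hj ih =>
      intro hjN
      rw [hdyn j hj (by omega)]
      exact (hπ j (y j) (by omega) (by omega) (ih (by omega))).2 _ (hw j hj (by omega))
  refine ⟨fun j h1 h2 => (hπ j (y j) (by omega) h2 (tube j h1 h2.le)).1, tube, ?_⟩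
  have := tube N hkN le_rfl
  rw [hcsN] at this
  exact this _ (hw N hkN le_rfl)
end
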